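/- Let G be a finite simple graph with m edges, T triangles, and degeneracy at most κ (κ ≥ 1), and let ε > 0. Call an edge e ε-costly if t_e · m · κ < d_e · ε · T. Then the number of triangles of G that contain at least one ε-costly edge is at most 2·ε·T. -/

import Mathlib

/-!
The count rests on the Chiba–Nishizeki bound `∑ₑ dₑ ≤ 2 * m * κ`. To see it, peel off vertices one
at a time, always choosing a vertex `v` with at most `κ` neighbours among the vertices that remain.
The at most `κ` edges destroyed with `v` each have degree at most `deg v`, so
`∑ₑ dₑ ≤ κ * ∑ᵥ deg v = 2 * m * κ`.

By a union bound, the number of triangles with a costly edge is at most the sum of `tₑ` over the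
costly edges `e`. Multiplying by `m * κ > 0` and using the definition of costly bounds this by
`ε * T * ∑ₑ dₑ ≤ ε * T * (2 * m * κ)`, and `m * κ` cancels. A graph without edges has
no costly edge.
-/

/-- The degree of an edge `e = {u,v}`: `min (deg u) (deg v)`. -/
def edgeDeg {V : Type*} [Fintype V] (G : SimpleGraph V) [DecidableRel G.Adj] : Sym2 V → ℕ :=
  Sym2.lift ⟨fun u v => min (G.degree u) (G.degree v), fun u v => by simp [min_comm]⟩

/-- The number of triangles (3-cliques) of `G` containing the edge `e`, i.e. `t_e`. -/
def edgeTri {V : Type*} [Fintype V] [DecidableEq V] (G : SimpleGraph V)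
    [DecidableRel G.Adj] (e : Sym2 V) : ℕ :=
  ((G.cliqueFinset 3).filter (fun s => e ∈ s.sym2)).card

/-- The peeling argument, localized to the edges inside a vertex set `S` so that it can be proved by
induction on `S`; the degrees are those of the whole graph. -/
lemma sum_edgeDeg_sym2_le {V : Type*} [Fintype V] [DecidableEq V] (G : SimpleGraph V)
    [DecidableRel G.Adj] (κ : ℕ)
    (hdeg : ∀ S : Finset V, S.Nonempty →
      ∃ v ∈ S, (S.filter (fun w => G.Adj v w)).card ≤ κ) (S : Finset V) :
    ∑ e ∈ G.edgeFinset.filter (fun e => e ∈ S.sym2), edgeDeg G e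
      ≤ κ * ∑ v ∈ S, G.degree v := by
  induction S using Finset.strongInduction with
  | H S ih =>
  rcases S.eq_empty_or_nonempty with rfl | hS
  · simp
  obtain ⟨v, hv, hκ⟩ := hdeg S hS
  have hsub : G.edgeFinset.filter (fun e => e ∈ S.sym2) ⊆
      G.edgeFinset.filter (fun e => e ∈ (S.erase v).sym2) ∪
        (S.filter (fun w => G.Adj v w)).image (fun w => s(v, w)) := by
    intro e
    induction e using Sym2.ind with
    | _ a b =>
    simp only [Finset.mem_filter, Finset.mem_union, Finset.mem_image, Finset.mk_mem_sym2_iff,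
      SimpleGraph.mem_edgeFinset, SimpleGraph.mem_edgeSet, Finset.mem_erase]
    rintro ⟨hab, ha, hb⟩
    by_cases hav : a = v
    · subst hav
      exact Or.inr ⟨b, ⟨hb, hab⟩, rfl⟩
    by_cases hbv : b = v
    · subst hbv
      exact Or.inr ⟨a, ⟨ha, hab.symm⟩, Sym2.eq_swap⟩
    exact Or.inl ⟨hab, ⟨hav, ha⟩, hbv, hb⟩
  have hstar : ∑ e ∈ (S.filter (fun w => G.Adj v w)).image (fun w => s(v, w)), edgeDeg G e
      ≤ κ * G.degree v := by
    calc _ ≤ ((S.filter (fun w => G.Adj v w)).image (fun w => s(v, w))).card • G.degree v := by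
          refine Finset.sum_le_card_nsmul _ _ _ fun e he => ?_
          obtain ⟨w, -, rfl⟩ := Finset.mem_image.1 he
          exact min_le_left _ _
      _ ≤ κ * G.degree v := Nat.mul_le_mul_right _ (Finset.card_image_le.trans hκ)
  calc _ ≤ _ := Finset.sum_le_sum_of_subset hsub
    _ ≤ _ := (Nat.le_add_right _ _).trans (Finset.sum_union_inter).le
    _ ≤ κ * ∑ u ∈ S.erase v, G.degree u + κ * G.degree v :=
        add_le_add (ih _ (Finset.erase_ssubset hv)) hstar
    _ = κ * ∑ u ∈ S, G.degree u := by rw [← mul_add, Finset.sum_erase_add _ _ hv]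

/-- The Chiba–Nishizeki bound `∑ₑ dₑ ≤ 2 * m * κ`. -/
lemma sum_edgeDeg_le {V : Type*} [Fintype V] [DecidableEq V] (G : SimpleGraph V)
    [DecidableRel G.Adj] (κ : ℕ)
    (hdeg : ∀ S : Finset V, S.Nonempty →
      ∃ v ∈ S, (S.filter (fun w => G.Adj v w)).card ≤ κ) :
    ∑ e ∈ G.edgeFinset, edgeDeg G e ≤ κ * (2 * G.edgeFinset.card) := by
  have h := sum_edgeDeg_sym2_le G κ hdeg Finset.univ
  rwa [Finset.sym2_univ, Finset.filter_true_of_mem (fun e _ => Finset.mem_univ e),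
    G.sum_degrees_eq_twice_card_edges] at h

/-- Let `G` have `m` edges, `T` triangles and degeneracy at most `κ ≥ 1`, and let `ε > 0`.
An edge `e` is `ε`-costly if `t_e * m * κ < d_e * ε * T`.  Then the number of triangles
of `G` containing at least one `ε`-costly edge is at most `2 * ε * T`. -/
theorem costly_triangles_le
    {V : Type*} [Fintype V] [DecidableEq V] (G : SimpleGraph V) [DecidableRel G.Adj]
    (κ : ℕ) (hκ : 1 ≤ κ) (ε : ℝ) (hε : 0 < ε)
    (hdeg : ∀ S : Finset V, S.Nonempty →
      ∃ v ∈ S, (S.filter (fun w => G.Adj v w)).card ≤ κ) :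
    (((G.cliqueFinset 3).filter (fun s => ∃ e ∈ G.edgeFinset, e ∈ s.sym2 ∧
        (edgeTri G e : ℝ) * (G.edgeFinset.card : ℝ) * (κ : ℝ)
          < (edgeDeg G e : ℝ) * ε * ((G.cliqueFinset 3).card : ℝ))).card : ℝ)
      ≤ 2 * ε * ((G.cliqueFinset 3).card : ℝ) := by
  rcases G.edgeFinset.eq_empty_or_nonempty with hE | hE
  · have hT : (0 : ℝ) ≤ 2 * ε * ((G.cliqueFinset 3).card : ℝ) := by positivity
    simpa only [hE, Finset.notMem_empty, false_and, exists_false, Finset.filter_false,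
      Finset.card_empty, Nat.cast_zero] using hT
  have hm : (0 : ℝ) < G.edgeFinset.card := by exact_mod_cast hE.card_pos
  have hκ' : (0 : ℝ) < κ := by exact_mod_cast hκ
  have hsum : (∑ e ∈ G.edgeFinset, (edgeDeg G e : ℝ)) ≤ κ * (2 * (G.edgeFinset.card : ℝ)) := by
    exact_mod_cast sum_edgeDeg_le G κ hdeg
  set T : ℝ := ((G.cliqueFinset 3).card : ℝ)
  set m : ℝ := (G.edgeFinset.card : ℝ)
  let C := G.edgeFinset.filter (fun e => (edgeTri G e : ℝ) * m * κ < (edgeDeg G e : ℝ) * ε * T)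
  have hunion : ((G.cliqueFinset 3).filter (fun s => ∃ e ∈ G.edgeFinset, e ∈ s.sym2 ∧
      (edgeTri G e : ℝ) * m * κ < (edgeDeg G e : ℝ) * ε * T)).card
      ≤ ∑ e ∈ C, edgeTri G e := by
    refine (Finset.card_le_card ?_).trans Finset.card_biUnion_le
    intro s hs
    obtain ⟨hs, e, he, hes, hc⟩ := Finset.mem_filter.1 hs
    exact Finset.mem_biUnion.2 ⟨e, Finset.mem_filter.2 ⟨he, hc⟩, Finset.mem_filter.2 ⟨hs, hes⟩⟩
  have hmul : (∑ e ∈ C, (edgeTri G e : ℝ)) * (m * κ) ≤ 2 * ε * T * (m * κ) := by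
    calc (∑ e ∈ C, (edgeTri G e : ℝ)) * (m * κ)
        = ∑ e ∈ C, (edgeTri G e : ℝ) * m * κ := by
          rw [Finset.sum_mul]
          exact Finset.sum_congr rfl fun e _ => by ring
      _ ≤ ∑ e ∈ C, (edgeDeg G e : ℝ) * ε * T :=
          Finset.sum_le_sum fun e he => (Finset.mem_filter.1 he).2.le
      _ ≤ ∑ e ∈ G.edgeFinset, (edgeDeg G e : ℝ) * ε * T :=
          Finset.sum_le_sum_of_subset_of_nonneg (Finset.filter_subset _ _)
            fun e _ _ => by positivity
      _ = (∑ e ∈ G.edgeFinset, (edgeDeg G e : ℝ)) * (ε * T) := by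
          rw [Finset.sum_mul]
          exact Finset.sum_congr rfl fun e _ => by ring
      _ ≤ κ * (2 * m) * (ε * T) := by gcongr
      _ = 2 * ε * T * (m * κ) := by ring
  refine le_trans ?_ (le_of_mul_le_mul_right hmul (mul_pos hm hκ'))
  exact_mod_cast hunion
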